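/- With $\tilde H_2$ as in the context, define $\tilde H(x_1,x_2,y_1,y_2) = \frac12(x_1^2+y_1^2) + \tilde H_2(x_2,y_2)$ and the radial vector field $Y_0(z) = \frac12\,(x_1,\ x_2,\ y_1,\ y_2-\Lambda_3)$ at $z=(x_1,x_2,y_1,y_2)$. Then at every point $z$ with $x_2 \le 2\pi$ and $y_2 > 1$ that is different from the two critical points $(0,0,0,\Lambda_3)$ and $(0,2\pi,0,\Lambda_3)$, one has $\langle \nabla\tilde H(z), Y_0(z)\rangle > 0$. -/

import Mathlib

/-- The Kepler effective Hamiltonian `H₂(y) = -1/(2y²) - y`. -/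
noncomputable def H2K (y : ℝ) : ℝ := -(1 / (2 * y ^ 2)) - y

/-- `F(x,y) = ½(y - Λ₃)² - cos(x/2) + B`. -/
noncomputable def Ffun (Λ3 B : ℝ) (x y : ℝ) : ℝ :=
  (y - Λ3) ^ 2 / 2 - Real.cos (x / 2) + B

/-- The interpolated function `K(x,y) = (1 - f(y)) H₂(y) + f(y) F(x,y)`. -/
noncomputable def Kfun (Λ3 B : ℝ) (f : ℝ → ℝ) (x y : ℝ) : ℝ :=
  (1 - f y) * H2K y + f y * Ffun Λ3 B x y

/-- `G(x,y) = ½x² + ½(y - Λ₃)²`. -/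
noncomputable def Gfun (Λ3 : ℝ) (x y : ℝ) : ℝ := x ^ 2 / 2 + (y - Λ3) ^ 2 / 2

/-- `K̃(x,y) = (1 - g(x)) G(x,y) + g(x) K(x,y)`. -/
noncomputable def Ktil (Λ3 B : ℝ) (f g : ℝ → ℝ) (x y : ℝ) : ℝ :=
  (1 - g x) * Gfun Λ3 x y + g x * Kfun Λ3 B f x y

/-- `G̃(x,y) = ½(x - 4π)² + ½(y - Λ₃)²`. -/
noncomputable def Gtil (Λ3 : ℝ) (x y : ℝ) : ℝ :=
  (x - 4 * Real.pi) ^ 2 / 2 + (y - Λ3) ^ 2 / 2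

/-- The doubly interpolated function
`H̃₂(x,y) = g̃(x) K̃(x,y) + (1 - g̃(x)) G̃(x,y)`, with `g̃(x) = g(4π - x)`. -/
noncomputable def H2til (Λ3 B : ℝ) (f g : ℝ → ℝ) (x y : ℝ) : ℝ :=
  g (4 * Real.pi - x) * Ktil Λ3 B f g x y + (1 - g (4 * Real.pi - x)) * Gtil Λ3 x y

/-- The modified Hamiltonian `H̃(x₁,x₂,y₁,y₂) = ½(x₁² + y₁²) + H̃₂(x₂,y₂)` on `ℝ⁴`,
with coordinates ordered as `(x₁, x₂, y₁, y₂)`. -/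
noncomputable def Htil (Λ3 B : ℝ) (f g : ℝ → ℝ) (z : ℝ × ℝ × ℝ × ℝ) : ℝ :=
  (z.1 ^ 2 + z.2.2.1 ^ 2) / 2 + H2til Λ3 B f g z.2.1 z.2.2.2

/-!
Each interpolation step `(1 - φ) A + φ B` contributes to `dH̃(Y₀)` a convex combination of `dA(Y₀)`
and `dB(Y₀)`, plus the cross term `dφ(Y₀) (B - A)`. The cross terms are nonnegative because a cutoff
has a signed derivative supported in its transition interval, where `F ≤ H₂` and `y₂ < Λ₃`
(cutoff `f`), respectively `K ≤ G` and `x₂ ≤ 0` (cutoff `g`). The quadratic `G` is positive along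
`Y₀` away from `p_{c1}`; the functions `F` and `H₂`, after adding the oscillator `½(x₁² + y₁²)`, are
so where they carry weight, because `x sin (x / 2) ≥ 0` for `|x| ≤ 2π` and `H₂' < 0` for `y > 1`.
The second interpolation, towards `G̃`, is invisible for `x₂ ≤ 2π`.
-/

open Real

/-- A differentiable non-decreasing cutoff function: `0` on `(-∞, a]` and `1` on `[b, ∞)`. -/
structure IsCutoff (φ : ℝ → ℝ) (a b : ℝ) : Prop where
  differentiable : Differentiable ℝ φ
  monotone : Monotone φ
  eq_zero : ∀ t, t ≤ a → φ t = 0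
  eq_one : ∀ t, b ≤ t → φ t = 1

namespace IsCutoff

variable {φ : ℝ → ℝ} {a b : ℝ}

theorem nonneg (hφ : IsCutoff φ a b) (t : ℝ) : 0 ≤ φ t :=
  (hφ.eq_zero _ (min_le_right t a)).symm.trans_le (hφ.monotone (min_le_left t a))

theorem le_one (hφ : IsCutoff φ a b) (t : ℝ) : φ t ≤ 1 :=
  (hφ.monotone (le_max_left t b)).trans_eq (hφ.eq_one _ (le_max_right t b))

theorem lt_of_ne_zero (hφ : IsCutoff φ a b) {t : ℝ} (ht : φ t ≠ 0) : a < t :=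
  not_le.1 fun h => ht (hφ.eq_zero t h)

theorem lt_of_ne_one (hφ : IsCutoff φ a b) {t : ℝ} (ht : φ t ≠ 1) : t < b :=
  not_le.1 fun h => ht (hφ.eq_one t h)

theorem deriv_eq_zero_of_notMem_Ioo (hφ : IsCutoff φ a b) {t : ℝ} (ht : t ∉ Set.Ioo a b) :
    deriv φ t = 0 := by
  rcases le_or_gt t a with hta | hat
  · have hmin : IsLocalMin φ t :=
      .of_forall fun s => (hφ.eq_zero t hta).trans_le (hφ.nonneg s)
    exact hmin.deriv_eq_zero
  · have hmax : IsLocalMax φ t :=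
      .of_forall fun s => (hφ.le_one s).trans_eq (hφ.eq_one t (not_lt.1 fun h => ht ⟨hat, h⟩)).symm
    exact hmax.deriv_eq_zero

theorem deriv_mul_nonneg (hφ : IsCutoff φ a b) {t r : ℝ} (hr : t ∈ Set.Ioo a b → 0 ≤ r) :
    0 ≤ deriv φ t * r := by
  by_cases ht : t ∈ Set.Ioo a b
  · exact mul_nonneg hφ.monotone.deriv_nonneg (hr ht)
  · rw [hφ.deriv_eq_zero_of_notMem_Ioo ht, zero_mul]

end IsCutoff

theorem interpolation_pos {t r s : ℝ} (ht₀ : 0 ≤ t) (ht₁ : t ≤ 1) (hr : t ≠ 1 → 0 < r)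
    (hs : t ≠ 0 → 0 < s) : 0 < (1 - t) * r + t * s := by
  rcases ht₀.eq_or_lt with rfl | htpos
  · simpa using hr zero_ne_one
  rcases ht₁.eq_or_lt with rfl | htlt
  · simpa using hs one_ne_zero
  · exact add_pos (mul_pos (sub_pos.2 htlt) (hr htlt.ne)) (mul_pos htpos (hs htpos.ne'))

section Interpolation

variable {E : Type*} [NormedAddCommGroup E] [NormedSpace ℝ E] {φ A B : E → ℝ} {z : E}

theorem fderiv_interpolation_apply (hφ : DifferentiableAt ℝ φ z) (hA : DifferentiableAt ℝ A z)
    (hB : DifferentiableAt ℝ B z) (v : E) :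
    fderiv ℝ (fun w => (1 - φ w) * A w + φ w * B w) z v =
      (1 - φ z) * fderiv ℝ A z v + φ z * fderiv ℝ B z v + fderiv ℝ φ z v * (B z - A z) := by
  have hAB : HasFDerivAt (fun w => (1 - φ w) * A w + φ w * B w) _ z :=
    ((hφ.hasFDerivAt.const_sub 1).mul hA.hasFDerivAt).add (hφ.hasFDerivAt.mul hB.hasFDerivAt)
  rw [hAB.fderiv]
  simp only [add_apply, smul_apply, neg_apply, smul_eq_mul]
  ring

theorem fderiv_interpolation_apply_pos (hφ : DifferentiableAt ℝ φ z) (hA : DifferentiableAt ℝ A z)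
    (hB : DifferentiableAt ℝ B z) {v : E} (hφ₀ : 0 ≤ φ z) (hφ₁ : φ z ≤ 1)
    (hAv : φ z ≠ 1 → 0 < fderiv ℝ A z v) (hBv : φ z ≠ 0 → 0 < fderiv ℝ B z v)
    (hcross : 0 ≤ fderiv ℝ φ z v * (B z - A z)) :
    0 < fderiv ℝ (fun w => (1 - φ w) * A w + φ w * B w) z v := by
  rw [fderiv_interpolation_apply hφ hA hB]
  exact add_pos_of_pos_of_nonneg (interpolation_pos hφ₀ hφ₁ hAv hBv) hcross

end Interpolation

theorem hasDerivAt_sq_div_two (t : ℝ) : HasDerivAt (fun s : ℝ => s ^ 2 / 2) t t := by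
  simpa using (hasDerivAt_pow 2 t).div_const 2

theorem hasDerivAt_sub_sq_div_two (r t : ℝ) :
    HasDerivAt (fun s : ℝ => (s - r) ^ 2 / 2) (t - r) t :=
  (hasDerivAt_sq_div_two (t - r)).comp_sub_const t r

theorem hasDerivAt_H2K {y : ℝ} (hy : y ≠ 0) : HasDerivAt H2K (1 / y ^ 3 - 1) y := by
  have hsq : HasDerivAt (fun t : ℝ => 2 * t ^ 2) (4 * y) y :=
    ((hasDerivAt_pow 2 y).const_mul 2).congr_deriv (by norm_num; ring)
  have hH2 : HasDerivAt (fun t : ℝ => -(2 * t ^ 2)⁻¹ - t) (1 / y ^ 3 - 1) y := by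
    refine ((hsq.fun_inv (by positivity)).fun_neg.sub (hasDerivAt_id y)).congr_deriv ?_
    field_simp
    ring
  convert hH2 using 1
  ext t
  rw [H2K, one_div]

theorem H2K_nonpos {y : ℝ} (hy : 0 ≤ y) : H2K y ≤ 0 := by
  have : 0 ≤ 1 / (2 * y ^ 2) := by positivity
  unfold H2K
  linarith

theorem Ffun_le_Gfun {B : ℝ} (hB : B ≤ 1) (Λ3 x y : ℝ) : Ffun Λ3 B x y ≤ Gfun Λ3 x y := by
  have hcos := one_sub_sq_div_two_le_cos (x := x / 2)
  unfold Ffun Gfun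
  linarith [sq_nonneg x]

theorem Kfun_le_Gfun {B a b : ℝ} {f : ℝ → ℝ} (hf : IsCutoff f a b) (hB : B ≤ 1) (Λ3 x : ℝ) {y : ℝ}
    (hy : 0 ≤ y) : Kfun Λ3 B f x y ≤ Gfun Λ3 x y := by
  have hH2G : H2K y ≤ Gfun Λ3 x y := (H2K_nonpos hy).trans (by unfold Gfun; positivity)
  exact convex_Iic (Gfun Λ3 x y) hH2G (Ffun_le_Gfun hB Λ3 x y) (sub_nonneg.2 (hf.le_one y))
    (hf.nonneg y) (sub_add_cancel 1 (f y))

theorem Ffun_le_H2K {Λ3 B y : ℝ} (h : (y - Λ3) ^ 2 / 2 + B + 1 + 1 / (2 * y ^ 2) + y ≤ 0) (x : ℝ) :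
    Ffun Λ3 B x y ≤ H2K y := by
  unfold Ffun H2K
  linarith [neg_one_le_cos (x / 2)]

theorem mul_sin_half_nonneg {x : ℝ} (h₁ : -(2 * π) ≤ x) (h₂ : x ≤ 2 * π) :
    0 ≤ x * sin (x / 2) := by
  rcases le_total 0 x with h | h
  · exact mul_nonneg h (sin_nonneg_of_nonneg_of_le_pi (by linarith) (by linarith))
  · exact mul_nonneg_of_nonpos_of_nonpos h
      (sin_nonpos_of_nonpos_of_neg_pi_le (by linarith) (by linarith))

theorem mul_sin_half_pos {x : ℝ} (h₁ : -(2 * π) < x) (h₂ : x < 2 * π) (h₀ : x ≠ 0) :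
    0 < x * sin (x / 2) := by
  rcases h₀.lt_or_gt with h | h
  · exact mul_pos_of_neg_of_neg h (sin_neg_of_neg_of_neg_pi_lt (by linarith) (by linarith))
  · exact mul_pos h (sin_pos_of_pos_of_lt_pi (by linarith) (by linarith))

/-- The Hamiltonian `½(x₁² + y₁²) + h(x₂, y₂)` on `ℝ⁴`, a harmonic oscillator decoupled from `h`;
`H̃` is the case `h = H̃₂`. -/
noncomputable def withOscillator (h : ℝ → ℝ → ℝ) (z : ℝ × ℝ × ℝ × ℝ) : ℝ :=
  (z.1 ^ 2 + z.2.2.1 ^ 2) / 2 + h z.2.1 z.2.2.2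

/-- The Liouville vector field `Y₀(z) = ½(x₁, x₂, y₁, y₂ - Λ₃)`, radial with respect to
`p_{c1} = (0, 0, 0, Λ₃)`. -/
noncomputable def liouvilleField (Λ3 : ℝ) (z : ℝ × ℝ × ℝ × ℝ) : ℝ × ℝ × ℝ × ℝ :=
  (z.1 / 2, z.2.1 / 2, z.2.2.1 / 2, (z.2.2.2 - Λ3) / 2)

theorem withOscillator_interpolation (φ h₀ h₁ : ℝ → ℝ → ℝ) :
    withOscillator (fun x y => (1 - φ x y) * h₀ x y + φ x y * h₁ x y) =
      fun w => (1 - φ w.2.1 w.2.2.2) * withOscillator h₀ w +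
        φ w.2.1 w.2.2.2 * withOscillator h₁ w := by
  ext w
  simp only [withOscillator]
  ring

section PhaseSpace

variable {Λ3 B a b c d : ℝ} {f g : ℝ → ℝ} {z : ℝ × ℝ × ℝ × ℝ}

theorem fderiv_withOscillator_add_apply {p q : ℝ → ℝ} {p' q' : ℝ} (hp : HasDerivAt p p' z.2.1)
    (hq : HasDerivAt q q' z.2.2.2) (v : ℝ × ℝ × ℝ × ℝ) :
    fderiv ℝ (withOscillator fun x y => p x + q y) z v =
      z.1 * v.1 + z.2.2.1 * v.2.2.1 + p' * v.2.1 + q' * v.2.2.2 := by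
  have hx₁ : HasFDerivAt (𝕜 := ℝ) (fun w : ℝ × ℝ × ℝ × ℝ => w.1) _ z := hasFDerivAt_fst
  have hx₂ : HasFDerivAt (𝕜 := ℝ) (fun w : ℝ × ℝ × ℝ × ℝ => w.2.1) _ z := hasFDerivAt_snd.fst
  have hy₁ : HasFDerivAt (𝕜 := ℝ) (fun w : ℝ × ℝ × ℝ × ℝ => w.2.2.1) _ z := hasFDerivAt_snd.snd.fst
  have hy₂ : HasFDerivAt (𝕜 := ℝ) (fun w : ℝ × ℝ × ℝ × ℝ => w.2.2.2) _ z := hasFDerivAt_snd.snd.snd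
  have hosc := ((hasDerivAt_sq_div_two z.1).comp_hasFDerivAt z hx₁).add
    (HasDerivAt.comp_hasFDerivAt z (hasDerivAt_sq_div_two z.2.2.1) hy₁)
  have hpq := (HasDerivAt.comp_hasFDerivAt z hp hx₂).add (HasDerivAt.comp_hasFDerivAt z hq hy₂)
  have hH : HasFDerivAt (withOscillator fun x y => p x + q y) _ z :=
    (hosc.add hpq).congr_of_eventuallyEq (.of_forall fun w => by simp [withOscillator, add_div])
  rw [hH.fderiv]
  simp only [add_apply, smul_apply, ContinuousLinearMap.comp_apply, ContinuousLinearMap.coe_fst',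
    ContinuousLinearMap.coe_snd', smul_eq_mul]
  ring

theorem fderiv_withOscillator_Gfun_liouvilleField (Λ3 : ℝ) (z : ℝ × ℝ × ℝ × ℝ) :
    fderiv ℝ (withOscillator (Gfun Λ3)) z (liouvilleField Λ3 z) =
      (z.1 ^ 2 + z.2.1 ^ 2 + z.2.2.1 ^ 2 + (z.2.2.2 - Λ3) ^ 2) / 2 := by
  refine (fderiv_withOscillator_add_apply (hasDerivAt_sq_div_two z.2.1)
    (hasDerivAt_sub_sq_div_two Λ3 z.2.2.2) _).trans ?_
  simp only [liouvilleField]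
  ring

theorem fderiv_withOscillator_Ffun_liouvilleField (Λ3 B : ℝ) (z : ℝ × ℝ × ℝ × ℝ) :
    fderiv ℝ (withOscillator (Ffun Λ3 B)) z (liouvilleField Λ3 z) =
      (z.1 ^ 2 + z.2.2.1 ^ 2 + (z.2.2.2 - Λ3) ^ 2) / 2 + z.2.1 * sin (z.2.1 / 2) / 4 := by
  have hp : HasDerivAt (fun x : ℝ => B - cos (x / 2)) (sin (z.2.1 / 2) / 2) z.2.1 := by
    refine (((hasDerivAt_id z.2.1).div_const 2).cos.const_sub B).congr_deriv ?_
    simp only [id_eq]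
    ring
  have hF : Ffun Λ3 B = fun x y => (B - cos (x / 2)) + (y - Λ3) ^ 2 / 2 := by
    ext x y
    unfold Ffun
    ring
  rw [hF, fderiv_withOscillator_add_apply hp (hasDerivAt_sub_sq_div_two Λ3 _)]
  simp only [liouvilleField]
  ring

theorem fderiv_withOscillator_H2K_liouvilleField (Λ3 : ℝ) (hy : z.2.2.2 ≠ 0) :
    fderiv ℝ (withOscillator fun _ y => H2K y) z (liouvilleField Λ3 z) =
      (z.1 ^ 2 + z.2.2.1 ^ 2 + (z.2.2.2 - Λ3) * (1 / z.2.2.2 ^ 3 - 1)) / 2 := by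
  have hH2 := fderiv_withOscillator_add_apply (hasDerivAt_const z.2.1 0) (hasDerivAt_H2K hy)
    (liouvilleField Λ3 z)
  simp only [zero_add] at hH2
  rw [hH2]
  simp only [liouvilleField]
  ring

theorem fderiv_withOscillator_Gfun_liouvilleField_pos (hz : z ≠ (0, 0, 0, Λ3)) :
    0 < fderiv ℝ (withOscillator (Gfun Λ3)) z (liouvilleField Λ3 z) := by
  rw [fderiv_withOscillator_Gfun_liouvilleField]
  by_contra! hle
  obtain ⟨x₁, x₂, y₁, y₂⟩ := z
  have hx₁sq := sq_nonneg x₁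
  have hx₂sq := sq_nonneg x₂
  have hy₁sq := sq_nonneg y₁
  have hy₂sq := sq_nonneg (y₂ - Λ3)
  have hx₁ : x₁ = 0 := (sq_nonpos_iff x₁).1 (by linarith)
  have hx₂ : x₂ = 0 := (sq_nonpos_iff x₂).1 (by linarith)
  have hy₁ : y₁ = 0 := (sq_nonpos_iff y₁).1 (by linarith)
  have hy₂ : y₂ = Λ3 := sub_eq_zero.1 ((sq_nonpos_iff (y₂ - Λ3)).1 (by linarith))
  exact hz (by rw [hx₁, hx₂, hy₁, hy₂])

theorem fderiv_withOscillator_Ffun_liouvilleField_pos (B : ℝ) (hx : -(2 * π) < z.2.1)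
    (hx' : z.2.1 ≤ 2 * π) (hz₁ : z ≠ (0, 0, 0, Λ3)) (hz₂ : z ≠ (0, 2 * π, 0, Λ3)) :
    0 < fderiv ℝ (withOscillator (Ffun Λ3 B)) z (liouvilleField Λ3 z) := by
  have hsin := mul_sin_half_nonneg hx.le hx'
  have hzero : z.2.1 * sin (z.2.1 / 2) ≤ 0 → z.2.1 = 0 ∨ z.2.1 = 2 * π := by
    intro hle
    by_contra! hne
    exact hle.not_gt (mul_sin_half_pos hx (hx'.lt_of_ne hne.2) hne.1)
  rw [fderiv_withOscillator_Ffun_liouvilleField]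
  by_contra! hle
  obtain ⟨x₁, x₂, y₁, y₂⟩ := z
  simp only at hx hx' hsin hzero hle
  have hx₁sq := sq_nonneg x₁
  have hy₁sq := sq_nonneg y₁
  have hy₂sq := sq_nonneg (y₂ - Λ3)
  have hx₁ : x₁ = 0 := (sq_nonpos_iff x₁).1 (by linarith)
  have hy₁ : y₁ = 0 := (sq_nonpos_iff y₁).1 (by linarith)
  have hy₂ : y₂ = Λ3 := sub_eq_zero.1 ((sq_nonpos_iff (y₂ - Λ3)).1 (by linarith))
  rcases hzero (by linarith) with hx₂ | hx₂
  · exact hz₁ (by rw [hx₁, hx₂, hy₁, hy₂])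
  · exact hz₂ (by rw [hx₁, hx₂, hy₁, hy₂])

theorem fderiv_withOscillator_H2K_liouvilleField_pos (hy : 1 < z.2.2.2) (hyΛ : z.2.2.2 < Λ3) :
    0 < fderiv ℝ (withOscillator fun _ y => H2K y) z (liouvilleField Λ3 z) := by
  have hH2' : 1 / z.2.2.2 ^ 3 - 1 < 0 :=
    sub_neg.2 ((div_lt_one (by positivity)).2 (one_lt_pow₀ hy three_ne_zero))
  have hmul : 0 < (z.2.2.2 - Λ3) * (1 / z.2.2.2 ^ 3 - 1) :=
    mul_pos_of_neg_of_neg (sub_neg.2 hyΛ) hH2'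
  rw [fderiv_withOscillator_H2K_liouvilleField Λ3 (by positivity)]
  positivity

theorem differentiableAt_withOscillator_H2K (hy : z.2.2.2 ≠ 0) :
    DifferentiableAt ℝ (withOscillator fun _ y => H2K y) z := by
  have hH2 : DifferentiableAt ℝ (fun w : ℝ × ℝ × ℝ × ℝ => H2K w.2.2.2) z :=
    .fun_comp' z (hasDerivAt_H2K hy).differentiableAt (by fun_prop)
  unfold withOscillator
  fun_prop

theorem differentiableAt_withOscillator_Ffun (Λ3 B : ℝ) (z : ℝ × ℝ × ℝ × ℝ) :
    DifferentiableAt ℝ (withOscillator (Ffun Λ3 B)) z := by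
  unfold withOscillator Ffun
  fun_prop

theorem withOscillator_Kfun (Λ3 B : ℝ) (f : ℝ → ℝ) :
    withOscillator (Kfun Λ3 B f) = fun w => (1 - f w.2.2.2) * withOscillator (fun _ y => H2K y) w +
      f w.2.2.2 * withOscillator (Ffun Λ3 B) w :=
  withOscillator_interpolation (fun _ y => f y) (fun _ y => H2K y) (Ffun Λ3 B)

theorem withOscillator_Ktil (Λ3 B : ℝ) (f g : ℝ → ℝ) :
    withOscillator (Ktil Λ3 B f g) = fun w => (1 - g w.2.1) * withOscillator (Gfun Λ3) w +
      g w.2.1 * withOscillator (Kfun Λ3 B f) w :=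
  withOscillator_interpolation (fun x _ => g x) (Gfun Λ3) (Kfun Λ3 B f)

theorem differentiableAt_withOscillator_Kfun (hf : DifferentiableAt ℝ f z.2.2.2)
    (hy : z.2.2.2 ≠ 0) :
    DifferentiableAt ℝ (withOscillator (Kfun Λ3 B f)) z := by
  have hH2 := differentiableAt_withOscillator_H2K hy
  have hF := differentiableAt_withOscillator_Ffun Λ3 B z
  rw [withOscillator_Kfun]
  fun_prop

theorem fderiv_withOscillator_Kfun_liouvilleField_pos (hf : IsCutoff f a b) (hbΛ : b ≤ Λ3)
    (hFH2 : ∀ y ∈ Set.Ioo a b, (y - Λ3) ^ 2 / 2 + B + 1 + 1 / (2 * y ^ 2) + y ≤ 0)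
    (hx : -(2 * π) < z.2.1) (hx' : z.2.1 ≤ 2 * π) (hy : 1 < z.2.2.2)
    (hz₁ : z ≠ (0, 0, 0, Λ3)) (hz₂ : z ≠ (0, 2 * π, 0, Λ3)) :
    0 < fderiv ℝ (withOscillator (Kfun Λ3 B f)) z (liouvilleField Λ3 z) := by
  have hfd : HasFDerivAt (𝕜 := ℝ) (fun w : ℝ × ℝ × ℝ × ℝ => f w.2.2.2) _ z :=
    (hf.differentiable z.2.2.2).hasDerivAt.comp_hasFDerivAt z hasFDerivAt_snd.snd.snd
  rw [withOscillator_Kfun]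
  refine fderiv_interpolation_apply_pos hfd.differentiableAt
    (differentiableAt_withOscillator_H2K (by positivity))
    (differentiableAt_withOscillator_Ffun Λ3 B z) (hf.nonneg _) (hf.le_one _)
    (fun hf₁ => fderiv_withOscillator_H2K_liouvilleField_pos hy
      ((hf.lt_of_ne_one hf₁).trans_le hbΛ))
    (fun _ => fderiv_withOscillator_Ffun_liouvilleField_pos B hx hx' hz₁ hz₂) ?_
  have hcross : 0 ≤ deriv f z.2.2.2 *
      ((z.2.2.2 - Λ3) / 2 * (Ffun Λ3 B z.2.1 z.2.2.2 - H2K z.2.2.2)) :=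
    hf.deriv_mul_nonneg fun hyab => mul_nonneg_of_nonpos_of_nonpos
      (by linarith [hyab.2]) (sub_nonpos.2 (Ffun_le_H2K (hFH2 _ hyab) _))
  simpa [hfd.fderiv, withOscillator, liouvilleField, mul_assoc] using hcross

theorem fderiv_withOscillator_Ktil_liouvilleField_pos (hf : IsCutoff f a b) (hg : IsCutoff g c d)
    (hbΛ : b ≤ Λ3) (hc : -(2 * π) ≤ c) (hd : d ≤ 0) (hB : B ≤ 1)
    (hFH2 : ∀ y ∈ Set.Ioo a b, (y - Λ3) ^ 2 / 2 + B + 1 + 1 / (2 * y ^ 2) + y ≤ 0)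
    (hx : z.2.1 ≤ 2 * π) (hy : 1 < z.2.2.2)
    (hz₁ : z ≠ (0, 0, 0, Λ3)) (hz₂ : z ≠ (0, 2 * π, 0, Λ3)) :
    0 < fderiv ℝ (withOscillator (Ktil Λ3 B f g)) z (liouvilleField Λ3 z) := by
  have hgd : HasFDerivAt (𝕜 := ℝ) (fun w : ℝ × ℝ × ℝ × ℝ => g w.2.1) _ z :=
    (hg.differentiable z.2.1).hasDerivAt.comp_hasFDerivAt z hasFDerivAt_snd.fst
  have hG : DifferentiableAt ℝ (withOscillator (Gfun Λ3)) z := by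
    unfold withOscillator Gfun
    fun_prop
  rw [withOscillator_Ktil]
  refine fderiv_interpolation_apply_pos hgd.differentiableAt hG
    (differentiableAt_withOscillator_Kfun (hf.differentiable _) (by positivity))
    (hg.nonneg _) (hg.le_one _)
    (fun _ => fderiv_withOscillator_Gfun_liouvilleField_pos hz₁)
    (fun hg₀ => fderiv_withOscillator_Kfun_liouvilleField_pos hf hbΛ hFH2
      (hc.trans_lt (hg.lt_of_ne_zero hg₀)) hx hy hz₁ hz₂) ?_
  have hcross : 0 ≤ deriv g z.2.1 *
      (z.2.1 / 2 * (Kfun Λ3 B f z.2.1 z.2.2.2 - Gfun Λ3 z.2.1 z.2.2.2)) :=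
    hg.deriv_mul_nonneg fun hxcd => mul_nonneg_of_nonpos_of_nonpos
      (by linarith [hxcd.2]) (sub_nonpos.2 (Kfun_le_Gfun hf hB _ _ (by positivity)))
  simpa [hgd.fderiv, withOscillator, liouvilleField, mul_assoc] using hcross

theorem Htil_eventuallyEq_withOscillator_Ktil (hg : IsCutoff g c d) (Λ3 B : ℝ) (f : ℝ → ℝ)
    (hx : z.2.1 < 4 * π - d) :
    Htil Λ3 B f g =ᶠ[nhds z] withOscillator (Ktil Λ3 B f g) := by
  have hnear : ∀ᶠ w : ℝ × ℝ × ℝ × ℝ in nhds z, w.2.1 < 4 * π - d :=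
    continuousAt_id.snd.fst.eventually_lt continuousAt_const hx
  filter_upwards [hnear] with w hw
  have hgw : g (4 * π - w.2.1) = 1 := hg.eq_one _ (by linarith)
  simp [Htil, H2til, withOscillator, hgw]

end PhaseSpace

theorem stmt_11_general {Λ3 B a b c d : ℝ} {f g : ℝ → ℝ} (hf : IsCutoff f a b)
    (hg : IsCutoff g c d) (hbΛ : b ≤ Λ3) (hc : -(2 * π) ≤ c) (hd : d ≤ 0) (hB : B ≤ 1)
    (hFH2 : ∀ y ∈ Set.Ioo a b, (y - Λ3) ^ 2 / 2 + B + 1 + 1 / (2 * y ^ 2) + y ≤ 0)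
    {z : ℝ × ℝ × ℝ × ℝ} (hx : z.2.1 ≤ 2 * π) (hy : 1 < z.2.2.2)
    (hz₁ : z ≠ (0, 0, 0, Λ3)) (hz₂ : z ≠ (0, 2 * π, 0, Λ3)) :
    0 < fderiv ℝ (Htil Λ3 B f g) z (liouvilleField Λ3 z) := by
  rw [(Htil_eventuallyEq_withOscillator_Ktil hg Λ3 B f (by linarith [pi_pos])).fderiv_eq]
  exact fderiv_withOscillator_Ktil_liouvilleField_pos hf hg hbΛ hc hd hB hFH2 hx hy hz₁ hz₂

/-- First transversality claim of Section 5.3 of the paper: the radial vector field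
`Y₀(z) = ½(x₁, x₂, y₁, y₂ - Λ₃)` satisfies `⟨∇H̃(z), Y₀(z)⟩ = dH̃(Y₀)(z) > 0` at every
point with `x₂ ≤ 2π`, `y₂ > 1` other than the two critical points. -/
theorem stmt_11 (Λ2 Λ3 ε0 B ε1 : ℝ) (f g : ℝ → ℝ)
    (hΛ2 : 1 < Λ2) (hΛ23 : Λ2 < Λ3)
    (hε0 : 0 < ε0) (hε0' : ε0 < (Λ3 - Λ2) / 2)
    (hB : ∀ y ∈ Set.Icc (Λ2 + ε0) (Λ2 + 2 * ε0),
      (y - Λ3) ^ 2 / 2 + B + 1 + 1 / (2 * y ^ 2) + y ≤ 0)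
    (hf : ContDiff ℝ (⊤ : ℕ∞) f) (hfmono : Monotone f)
    (hfrange : ∀ y, f y ∈ Set.Icc (0 : ℝ) 1)
    (hf0 : ∀ y, y ≤ Λ2 + ε0 → f y = 0)
    (hf1 : ∀ y, Λ2 + 2 * ε0 ≤ y → f y = 1)
    (hε1 : 0 < ε1) (hε1' : ε1 < Real.pi)
    (hg : ContDiff ℝ (⊤ : ℕ∞) g) (hgmono : Monotone g)
    (hgrange : ∀ x, g x ∈ Set.Icc (0 : ℝ) 1)
    (hg0 : ∀ x, x ≤ -(2 * ε1) → g x = 0)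
    (hg1 : ∀ x, -ε1 ≤ x → g x = 1) :
    ∀ z : ℝ × ℝ × ℝ × ℝ, z.2.1 ≤ 2 * Real.pi → 1 < z.2.2.2 →
      z ≠ (0, 0, 0, Λ3) → z ≠ (0, 2 * Real.pi, 0, Λ3) →
      0 < fderiv ℝ (Htil Λ3 B f g) z
        (z.1 / 2, z.2.1 / 2, z.2.2.1 / 2, (z.2.2.2 - Λ3) / 2) := by
  intro z hx hy hz₁ hz₂
  have hB1 : B ≤ 1 := by
    have hBa := hB (Λ2 + ε0) ⟨le_rfl, by linarith⟩
    have : 0 ≤ 1 / (2 * (Λ2 + ε0) ^ 2) := by positivity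
    linarith [sq_nonneg (Λ2 + ε0 - Λ3)]
  exact stmt_11_general ⟨hf.differentiable (by simp), hfmono, hf0, hf1⟩
    ⟨hg.differentiable (by simp), hgmono, hg0, hg1⟩ (by linarith) (by linarith) (by linarith) hB1
    (fun y hyab => hB y (Set.Ioo_subset_Icc_self hyab)) hx hy hz₁ hz₂
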